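/- arXiv:1004.4779 — 2 statements merged into one kernel-verified Lean document; each statement's English description precedes it below -/
import Mathlib

section
/- Let M be the monoid of injective maps ℕ → ℕ under composition (with identity the identity map), let G be a group, and let φ : M → G be a monoid homomorphism. Then φ is trivial: φ(f) = 1 for every injective map f : ℕ → ℕ. -/
/-- **Loday's trick.** Any monoid homomorphism from the monoid of injective self-maps of `ℕ`
(under composition) to a group is trivial. We encode the monoid homomorphism as a function
`φ` on all self-maps of `ℕ`, required to be multiplicative on injective maps and to send the
identity to `1`. -/
theorem injective_selfmaps_monoidHom_trivial
    (G : Type*) [Group G] (φ : (ℕ → ℕ) → G)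
    (hid : φ id = 1)
    (hcomp : ∀ f g : ℕ → ℕ, Function.Injective f → Function.Injective g →
      φ (f ∘ g) = φ f * φ g) :
    ∀ f : ℕ → ℕ, Function.Injective f → φ f = 1 := by
  intro f hf
  -- `h` applies `f` on the even numbers and fixes the odd numbers
  let h : ℕ → ℕ := fun n => if n % 2 = 0 then 2 * f (n / 2) else n
  have he : Function.Injective (fun n : ℕ => 2 * n) := fun a b hab => by
    simp only at hab; omega
  have ho : Function.Injective (fun n : ℕ => 2 * n + 1) := fun a b hab => by
    simp only at hab; omega
  have hh : Function.Injective h := by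
    intro a b hab
    simp only [h] at hab
    split_ifs at hab with h1 h2 h2
    · have := @hf (a / 2) (b / 2) (by omega)
      omega
    · omega
    · omega
    · exact hab
  have e1 : h ∘ (fun n : ℕ => 2 * n) = (fun n : ℕ => 2 * n) ∘ f := by
    funext n
    simp [h]
  have e2 : h ∘ (fun n : ℕ => 2 * n + 1) = (fun n : ℕ => 2 * n + 1) := by
    funext n
    have : ¬ (2 * n + 1) % 2 = 0 := by omega
    simp only [h, Function.comp_apply, if_neg this]
  have h1 : φ h = 1 := by
    have := hcomp h _ hh ho
    rw [e2] at this
    exact right_eq_mul.mp this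
  have h2 := hcomp h _ hh he
  rw [e1, hcomp _ f he hf, h1, one_mul] at h2
  exact mul_eq_left.mp h2
end

section
/- Let A be an associative unital ring, V a left A-module, and W ⊆ V a submodule admitting a complement (a submodule W' with V = W ⊕ W' internally). Let H(W) be the group of A-module automorphisms h of V such that (id_V − h)(V) ⊆ W and W ⊆ ker(id_V − h). Then H(W) acts transitively on the set of complements of W in V: for any two submodules W'_1, W'_2 with V = W ⊕ W'_1 = W ⊕ W'_2 there exists h ∈ H(W) with h(W'_1) = W'_2. Consequently, the subgroup Elem(W ↪ V) of Aut_A(V) generated by H(W) and H(W') does not depend on the choice of complement W'. -/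
/-- For a submodule `W` of a left `A`-module `V`, the set underlying the group `H(W)` of
automorphisms `h` of `V` with `(id - h)(V) ⊆ W ⊆ ker (id - h)`. -/
def HSet {A : Type u} {V : Type v} [Ring A] [AddCommGroup V] [Module A V]
    (W : Submodule A V) : Set (V ≃ₗ[A] V) :=
  {h | (∀ v : V, h v - v ∈ W) ∧ ∀ w ∈ W, h w = w}

theorem exists_proj_aux
    {A : Type u} {V : Type v} [Ring A] [AddCommGroup V] [Module A V]
    (W W₁ : Submodule A V) (h₁ : IsCompl W W₁) :
    ∃ p : V →ₗ[A] V, (∀ v, p v ∈ W) ∧ (∀ w ∈ W, p w = w) ∧ (∀ v, v - p v ∈ W₁) ∧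
      ∀ w ∈ W₁, p w = 0 := by
  have hk : ∀ w ∈ W₁, W.projectionOnto W₁ h₁ w = 0 := fun w hw =>
    (Submodule.projectionOnto_apply_eq_zero_iff h₁).2 hw
  have hw' : ∀ w (hw : w ∈ W), W.projectionOnto W₁ h₁ w = ⟨w, hw⟩ := fun w hw =>
    Submodule.projectionOnto_apply_left h₁ ⟨w, hw⟩
  refine ⟨W.subtype ∘ₗ W.projectionOnto W₁ h₁, fun v => ?_, fun w hw => ?_, fun v => ?_,
    fun w hw => ?_⟩
  · exact (W.projectionOnto W₁ h₁ v).2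
  · simp [hw' w hw]
  · rw [← Submodule.projectionOnto_apply_eq_zero_iff h₁, map_sub]
    exact sub_eq_zero.2 (hw' _ (W.projectionOnto W₁ h₁ v).2).symm
  · simp [hk w hw]

theorem exists_trans_aux
    {A : Type u} {V : Type v} [Ring A] [AddCommGroup V] [Module A V]
    (W W₁ W₂ : Submodule A V) (h₁ : IsCompl W W₁) (h₂ : IsCompl W W₂) :
    ∃ h : V ≃ₗ[A] V, h ∈ HSet W ∧ (∀ x ∈ W₁, h x ∈ W₂) ∧ ∀ y ∈ W₂, h.symm y ∈ W₁ := by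
  obtain ⟨p, p1, p2, p3, p4⟩ := exists_proj_aux W W₁ h₁
  obtain ⟨q, q1, q2, q3, q4⟩ := exists_proj_aux W W₂ h₂
  have e1 : ∀ v, p (p v) = p v := fun v => p2 _ (p1 v)
  have e2 : ∀ v, q (p v) = p v := fun v => q2 _ (p1 v)
  have e3 : ∀ v, p (q v) = q v := fun v => p2 _ (q1 v)
  have e4 : ∀ v, q (q v) = q v := fun v => q2 _ (q1 v)
  refine ⟨LinearEquiv.ofLinearMap (LinearMap.id + p - q) (LinearMap.id + q - p) ?_ ?_,
    ⟨fun v => ?_, fun w hw => ?_⟩, fun x hx => ?_, fun y hy => ?_⟩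
  · ext v
    simp [e1, e2, e3, e4]
    try abel
  · ext v
    simp [e1, e2, e3, e4]
    try abel
  · have : v + p v - q v - v = p v - q v := by abel
    simpa [this] using W.sub_mem (p1 v) (q1 v)
  · simp [p2 w hw, q2 w hw]
  · simpa [p4 x hx] using q3 x
  · simpa [q4 y hy] using p3 y

theorem closure_le_aux
    {A : Type u} {V : Type v} [Ring A] [AddCommGroup V] [Module A V]
    (W W₁ W₂ : Submodule A V) (h₁ : IsCompl W W₁) (h₂ : IsCompl W W₂) :
    Subgroup.closure (HSet W ∪ HSet W₂) ≤ Subgroup.closure (HSet W ∪ HSet W₁) := by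
  obtain ⟨h, hW, h12, h21⟩ := exists_trans_aux W W₁ W₂ h₁ h₂
  rw [Subgroup.closure_le]
  rintro g (hg | hg)
  · exact Subgroup.subset_closure (Or.inl hg)
  · have hh : h ∈ Subgroup.closure (HSet W ∪ HSet W₁) := Subgroup.subset_closure (Or.inl hW)
    have hc : h⁻¹ * g * h ∈ Subgroup.closure (HSet W ∪ HSet W₁) := by
      refine Subgroup.subset_closure (Or.inr ⟨fun v => ?_, fun w hw => ?_⟩)
      · have := h21 _ (hg.1 (h v))
        rw [map_sub, LinearEquiv.symm_apply_apply] at this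
        exact this
      · change h.symm (g (h w)) = w
        rw [hg.2 _ (h12 w hw), LinearEquiv.symm_apply_apply]
    have := mul_mem (mul_mem hh hc) (inv_mem hh)
    have e : h * (h⁻¹ * g * h) * h⁻¹ = g := by group
    rwa [e] at this

/-- `H(W)` acts transitively on the set of complements of `W`, and consequently the subgroup
`Elem(W ↪ V)` of `Aut_A(V)` generated by `H(W)` and `H(W')` does not depend on the choice of a
complement `W'` of `W`. -/
theorem HSet_transitive_on_complements_and_elem_well_defined
    {A : Type u} {V : Type v} [Ring A] [AddCommGroup V] [Module A V]
    (W W₁ W₂ : Submodule A V) (h₁ : IsCompl W W₁) (h₂ : IsCompl W W₂) :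
    (∃ h : V ≃ₗ[A] V, h ∈ HSet W ∧ W₁.map (h : V →ₗ[A] V) = W₂) ∧
    Subgroup.closure (HSet W ∪ HSet W₁) = Subgroup.closure (HSet W ∪ HSet W₂) := by
  obtain ⟨h, hW, h12, h21⟩ := exists_trans_aux W W₁ W₂ h₁ h₂
  refine ⟨⟨h, hW, le_antisymm ?_ fun y hy => ?_⟩,
    le_antisymm (closure_le_aux W W₂ W₁ h₂ h₁) (closure_le_aux W W₁ W₂ h₁ h₂)⟩
  · rintro _ ⟨x, hx, rfl⟩
    exact h12 x hx
  · exact ⟨h.symm y, h21 y hy, by simp⟩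
end
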